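/- Let u = ∏_{i=1}^{∞} a b^i = a b a b b a b b b ⋯ ∈ {a,b}^ℕ. Then there exist languages S₁, S₂, S₃, S₄ ⊆ {a,b}* with p_{S₁}(n) = O(1), p_{S₄}(n) = O(1), p*_{S₂}(n) = O(n) and p*_{S₃}(n) = O(n), such that Fac(u) ⊆ S₁ S₂ S₃ S₄. Consequently d*_1(u) = 4 and d_0(u) ≤ 6. -/

import Mathlib

open scoped ENNReal Pointwise

universe u

variable {A : Type u}

/-- The factor of `x` of length `n` starting at position `i`. -/
def wordSeg (x : ℕ → A) (i n : ℕ) : List A := (List.range n).map fun j => x (i + j)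

/-- The set of finite factors of a one-sided infinite word (including the empty word). -/
def Fac (x : ℕ → A) : Set (List A) := {u | ∃ i n, u = wordSeg x i n}

/-- The factor of a two-sided word `x` of length `n` starting at position `i`. -/
def wordSegZ (x : ℤ → A) (i : ℤ) (n : ℕ) : List A := (List.range n).map fun j => x (i + j)

/-- The set of finite factors of a two-sided infinite word (including the empty word). -/
def FacZ (x : ℤ → A) : Set (List A) := {u | ∃ (i : ℤ) (n : ℕ), u = wordSegZ x i n}

/-- The complexity of a language: the number of words of length `n` in it. -/
noncomputable def complexity (L : Set (List A)) (n : ℕ) : ℕ :=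
  {u ∈ L | u.length = n}.ncard

/-- The accumulative complexity `p*_L(n) = Σ_{i=0}^{n} p_L(i)`. -/
noncomputable def accComplexity (L : Set (List A)) (n : ℕ) : ℕ :=
  ∑ i ∈ Finset.range (n + 1), complexity L i

/-- Concatenation (product) of two languages. -/
def prodL (S T : Set (List A)) : Set (List A) := {w | ∃ s ∈ S, ∃ t ∈ T, w = s ++ t}

/-- `powL S k` = `S^k`, the set of concatenations of `k` elements of `S`. -/
def powL (S : Set (List A)) : ℕ → Set (List A)
  | 0 => {([] : List A)}
  | k + 1 => prodL (powL S k) S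

/-- `f(n) = O(n^α)`. -/
def PolyBound (f : ℕ → ℕ) (α : ℝ) : Prop :=
  ∃ C : ℝ, ∀ n : ℕ, 1 ≤ n → (f n : ℝ) ≤ C * (n : ℝ) ^ α

/-- The `α`-dimension `d_α(L)`: infimum of the integers `k ≥ 1` such that `L ⊆ S^k`
for some language `S` with `p_S(n) = O(n^α)`, with `inf ∅ = ⊤`. -/
noncomputable def polyDim (α : ℝ) (L : Set (List A)) : ℕ∞ :=
  sInf {k : ℕ∞ | ∃ m : ℕ, k = m ∧ 1 ≤ m ∧
    ∃ S : Set (List A), PolyBound (complexity S) α ∧ L ⊆ powL S m}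

/-- The accumulative `α`-dimension `d*_α(L)`. -/
noncomputable def polyDimStar (α : ℝ) (L : Set (List A)) : ℕ∞ :=
  sInf {k : ℕ∞ | ∃ m : ℕ, k = m ∧ 1 ≤ m ∧
    ∃ S : Set (List A), PolyBound (accComplexity S) α ∧ L ⊆ powL S m}

/-- The cost `c(L)`: infimum of the `α ≥ 0` with `d_α(L) < +∞`, with `inf ∅ = ⊤`. -/
noncomputable def cost (L : Set (List A)) : ℝ≥0∞ :=
  sInf {a : ℝ≥0∞ | ∃ α : ℝ, 0 ≤ α ∧ a = ENNReal.ofReal α ∧ polyDim α L ≠ ⊤}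

/-- A one-sided word is ultimately periodic if it is of the form `u v v v ⋯`. -/
def UltimatelyPeriodic (x : ℕ → A) : Prop :=
  ∃ N p : ℕ, 0 < p ∧ ∀ n : ℕ, N ≤ n → x (n + p) = x n

/-- A two-sided word is eventually periodic if it is periodic far enough to the right
and far enough to the left. -/
def EventuallyPeriodicZ (x : ℤ → A) : Prop :=
  (∃ p : ℕ, 0 < p ∧ ∃ N : ℤ, ∀ n : ℤ, N ≤ n → x (n + p) = x n) ∧
  (∃ p : ℕ, 0 < p ∧ ∃ N : ℤ, ∀ n : ℤ, n ≤ N → x (n - p) = x n)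

/-- A one-sided word is recurrent if each of its factors occurs infinitely often. -/
def Recurrent (x : ℕ → A) : Prop :=
  ∀ u ∈ Fac x, ∀ N : ℕ, ∃ i : ℕ, N ≤ i ∧ u = wordSeg x i u.length

/-- `u` is a right special factor for the language `F`. -/
def RightSpecial (F : Set (List A)) (u : List A) : Prop :=
  u ∈ F ∧ ∃ a b : A, a ≠ b ∧ u ++ [a] ∈ F ∧ u ++ [b] ∈ F

/-- `M` is a `D`-marker set for a word with factor set `F`: every factor of length
at least `D n` contains a factor of length `n` belonging to `M`. -/
def MarkerSet (D : ℕ) (M F : Set (List A)) : Prop :=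
  ∀ n : ℕ, 1 ≤ n → ∀ u ∈ F, D * n ≤ u.length →
    ∃ v ∈ M, v.length = n ∧ v <:+: u

/-- A language is factorial if it contains all factors of its members. -/
def IsFactorial (S : Set (List A)) : Prop := ∀ u ∈ S, ∀ v : List A, v <:+: u → v ∈ S

/-- The bound `Σ_{k ∈ I_n ∩ ℕ} p_M(2^k)(1 + 4 p(3n)/2^k)` where
`I_n = (log₂(n/(2D)), log₂(2n)]`, i.e. the sum is over natural `k` with
`n/(2D) < 2^k ≤ 2n`. -/
noncomputable def markerBound (M F : Set (List A)) (D n : ℕ) : ℝ :=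
  ∑ k ∈ (Finset.range (2 * n + 2)).filter (fun k => n < 2 * D * 2 ^ k ∧ 2 ^ k ≤ 2 * n),
    (complexity M (2 ^ k) : ℝ) * (1 + 4 * (complexity F (3 * n) : ℝ) / 2 ^ k)

-- The word `u = ∏_{i=1}^{∞} a b^i = a b a b b a b b b ⋯` over `{a,b}`, with
-- `a = false`, `b = true`: position `n` carries an `a` iff `n = (i-1)(i+2)/2` for some
-- `i ≥ 1`, i.e. iff `2n = m(m+3)` for some `m ≥ 0`.
open Classical in
noncomputable def uWord (n : ℕ) : Bool :=
  if ∃ m : ℕ, 2 * n = m * (m + 3) then false else true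

/-!
A factor of `u` containing `a` has the form `b^i a b^k a b^(k+1) ⋯ a b^(k+r-1) a b^j`. Write
`r = s + t` such that `m = k + s` is divisible by powers of two exceeding `s` and `t`, and cut the
factor after `b^i`, before `a b^m` and before the last `a`. The first and last pieces have at most
one candidate per length. A middle piece is given by its number `t` of blocks and by
`m = (c + 1) 2^e` with `t < 2^e`; its length is at least of the order of `c t²`, and `∑ 1 / t²`
converges, so the middle pieces have linear accumulative complexity. Hence `d*₁(u) ≤ 4`.

A language of linear accumulative complexity is contained in a product of two languages of bounded
complexity: going through its words by increasing length, cut a word of length `n` at one of its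
`n + 1` positions for which few earlier words have a left part or a right part of the same length;
such a position exists by averaging. Applied to the two middle languages, this gives `d₀(u) ≤ 6`.

For the lower bound, suppose that `Fac u ⊆ S³` and cut the factors
`b^i a b^(2κ) a b^(2κ+1) ⋯ a b^j` with `3q + 1` letters `a` into three words of `S`. If for every
`i < κ` some cut has two letters `a` in its left piece, then `S` contains `κ` words remembering `κ`,
and similarly on the right for `j < κ`. Otherwise some middle piece contains all but at most two of
the letters `a`, and it remembers `(q, κ)`. With `κ ≤ N / q` all these words have length `O(N)`, and
counting the words of `S` leads to `∑_{q ≤ Q} N / q = O(N)` uniformly in `Q`, contradicting the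
divergence of the harmonic series.
-/

section Complexity

lemma polyBound_natCast_iff {f : ℕ → ℕ} {d : ℕ} :
    PolyBound f d ↔ ∃ C : ℕ, ∀ n, f n ≤ C * (n + 1) ^ d := by
  simp only [PolyBound, Real.rpow_natCast]
  constructor
  · rintro ⟨C, hC⟩
    refine ⟨⌈C⌉₊ + f 0, fun n ↦ ?_⟩
    rcases Nat.eq_zero_or_pos n with rfl | hn
    · simp
    have hf : (f n : ℝ) ≤ (⌈C⌉₊ * (n + 1) ^ d : ℕ) := by
      push_cast
      calc (f n : ℝ) ≤ C * n ^ d := hC n hn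
        _ ≤ ⌈C⌉₊ * (n + 1) ^ d := by
          gcongr
          · exact Nat.le_ceil C
          · linarith
    calc f n ≤ ⌈C⌉₊ * (n + 1) ^ d := by exact_mod_cast hf
      _ ≤ (⌈C⌉₊ + f 0) * (n + 1) ^ d := by gcongr; omega
  · rintro ⟨C, hC⟩
    refine ⟨C * 2 ^ d, fun n hn ↦ ?_⟩
    have hf : f n ≤ C * 2 ^ d * n ^ d :=
      calc f n ≤ C * (n + 1) ^ d := hC n
        _ ≤ C * (2 * n) ^ d := by gcongr; omega
        _ = C * 2 ^ d * n ^ d := by rw [mul_pow, mul_assoc]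
    exact_mod_cast hf

lemma polyBound_zero_iff {f : ℕ → ℕ} : PolyBound f 0 ↔ ∃ C : ℕ, ∀ n, f n ≤ C := by
  simpa using polyBound_natCast_iff (f := f) (d := 0)

lemma polyBound_one_iff {f : ℕ → ℕ} :
    PolyBound f 1 ↔ ∃ C : ℕ, ∀ n, f n ≤ C * (n + 1) := by
  simpa using polyBound_natCast_iff (f := f) (d := 1)

lemma PolyBound.mono {f g : ℕ → ℕ} {α : ℝ} (hg : PolyBound g α) (hfg : ∀ n, f n ≤ g n) :
    PolyBound f α := by
  obtain ⟨C, hC⟩ := hg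
  exact ⟨C, fun n hn ↦ (Nat.cast_le.2 (hfg n)).trans (hC n hn)⟩

lemma PolyBound.add {f g : ℕ → ℕ} {α : ℝ} (hf : PolyBound f α) (hg : PolyBound g α) :
    PolyBound (f + g) α := by
  obtain ⟨C, hC⟩ := hf
  obtain ⟨D, hD⟩ := hg
  refine ⟨C + D, fun n hn ↦ ?_⟩
  rw [Pi.add_apply, Nat.cast_add, add_mul]
  exact add_le_add (hC n hn) (hD n hn)

lemma polyBound_list_sum {c : Language A → ℕ → ℕ} (hzero : c 0 = 0)
    (hadd : ∀ S T, c (S + T) ≤ c S + c T) {α : ℝ} {Ls : List (Language A)}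
    (hLs : ∀ S ∈ Ls, PolyBound (c S) α) : PolyBound (c Ls.sum) α := by
  induction Ls with
  | nil => exact ⟨0, fun n _ ↦ by simp [hzero]⟩
  | cons S Ls ih =>
    rw [List.forall_mem_cons] at hLs
    rw [List.sum_cons]
    exact (hLs.1.add (ih hLs.2)).mono (hadd S Ls.sum)

lemma complexity_zero : complexity (0 : Language A) = 0 := by
  funext n
  simp [complexity, Language.zero_def]

lemma accComplexity_zero : accComplexity (0 : Language A) = 0 := by
  funext n
  simp [accComplexity, complexity_zero]

lemma complexity_add_le (S T : Language A) :
    complexity (S + T) ≤ complexity S + complexity T := by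
  intro n
  have hunion : {w ∈ (S + T : Language A) | w.length = n} =
      {w ∈ S | w.length = n} ∪ {w ∈ T | w.length = n} := by
    ext w
    simp only [Set.mem_union, Set.mem_ofPred_eq, Language.mem_add, or_and_right]
  exact (congrArg Set.ncard hunion).trans_le (Set.ncard_union_le _ _)

lemma accComplexity_add_le (S T : Language A) :
    accComplexity (S + T) ≤ accComplexity S + accComplexity T := by
  intro n
  simp only [accComplexity, Pi.add_apply, ← Finset.sum_add_distrib]
  exact Finset.sum_le_sum fun i _ ↦ complexity_add_le S T i

lemma polyBound_accComplexity_of_polyBound_complexity {S : Set (List A)}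
    (hS : PolyBound (complexity S) 0) : PolyBound (accComplexity S) 1 := by
  obtain ⟨C, hC⟩ := polyBound_zero_iff.1 hS
  refine polyBound_one_iff.2 ⟨C, fun n ↦ ?_⟩
  calc accComplexity S n ≤ ∑ _i ∈ Finset.range (n + 1), C := Finset.sum_le_sum fun i _ ↦ hC i
    _ = C * (n + 1) := by simp [mul_comm]

variable [Finite A]

lemma finite_setOf_mem_length_le (S : Set (List A)) (n : ℕ) : {w ∈ S | w.length ≤ n}.Finite :=
  (List.finite_length_le A n).subset fun _ hw ↦ hw.2

lemma accComplexity_eq_ncard (S : Set (List A)) (n : ℕ) :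
    accComplexity S n = {w ∈ S | w.length ≤ n}.ncard := by
  classical
  have hfin := finite_setOf_mem_length_le S n
  rw [Set.ncard_eq_toFinset_card _ hfin,
    Finset.card_eq_sum_card_fiberwise (f := List.length) (t := Finset.range (n + 1))]
  · refine Finset.sum_congr rfl fun i hi ↦ ?_
    rw [complexity, ← Set.ncard_coe_finset]
    congr 1
    ext w
    have := Finset.mem_range.1 hi
    simp only [Finset.coe_filter, Set.Finite.mem_toFinset, Set.mem_ofPred_eq]
    grind
  · intro w hw
    have : w ∈ S ∧ w.length ≤ n := by simpa using hw
    simpa [Nat.lt_succ_iff] using this.2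

end Complexity

section Powers

lemma prodL_eq_mul (S T : Language A) : prodL S T = S * T :=
  Set.ext fun w ↦ by
    change (∃ s ∈ S, ∃ t ∈ T, w = s ++ t) ↔ w ∈ S * T
    simp only [Language.mem_mul, eq_comm]

lemma powL_eq_pow (S : Language A) (k : ℕ) : powL S k = S ^ k := by
  induction k with
  | zero => rfl
  | succ k ih =>
    change prodL (powL S k) S = _
    rw [ih, pow_succ]
    exact prodL_eq_mul _ _

lemma prod_le_sum_pow_length (Ls : List (Language A)) : Ls.prod ≤ Ls.sum ^ Ls.length :=
  List.prod_le_pow_card Ls Ls.sum fun _ hS ↦ List.le_sum_of_mem hS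

lemma mem_powL_sep_length_le {S : Set (List A)} {m n : ℕ} {w : List A} (hw : w ∈ powL S m)
    (hn : w.length ≤ n) : w ∈ powL {s ∈ S | s.length ≤ n} m := by
  induction m generalizing w with
  | zero => exact hw
  | succ m ih =>
    obtain ⟨s, hs, t, ht, rfl⟩ := hw
    rw [List.length_append] at hn
    exact ⟨s, ih hs (by omega), t, ⟨ht, by omega⟩, rfl⟩

end Powers

section Dimension

lemma polyDim_le_length {L : Set (List A)} {α : ℝ} {Ls : List (Language A)} (hne : Ls ≠ [])
    (hLs : ∀ S ∈ Ls, PolyBound (complexity S) α) (hL : L ⊆ Ls.prod) :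
    polyDim α L ≤ Ls.length := by
  refine sInf_le ⟨Ls.length, rfl, List.length_pos_iff.2 hne, Ls.sum,
    polyBound_list_sum complexity_zero complexity_add_le hLs, hL.trans ?_⟩
  exact (prod_le_sum_pow_length Ls).trans (powL_eq_pow _ _).ge

lemma polyDimStar_le_length {L : Set (List A)} {α : ℝ} {Ls : List (Language A)} (hne : Ls ≠ [])
    (hLs : ∀ S ∈ Ls, PolyBound (accComplexity S) α) (hL : L ⊆ Ls.prod) :
    polyDimStar α L ≤ Ls.length := by
  refine sInf_le ⟨Ls.length, rfl, List.length_pos_iff.2 hne, Ls.sum,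
    polyBound_list_sum accComplexity_zero accComplexity_add_le hLs, hL.trans ?_⟩
  exact (prod_le_sum_pow_length Ls).trans (powL_eq_pow _ _).ge

lemma polyBound_accComplexity_one {α : ℝ} (hα : 0 ≤ α) :
    PolyBound (accComplexity (1 : Language A)) α := by
  have hcomplexity (i : ℕ) : complexity (1 : Language A) i = if i = 0 then 1 else 0 := by
    have hset : {w ∈ (1 : Language A) | w.length = i} = if i = 0 then {[]} else ∅ := by
      ext w
      change w = [] ∧ w.length = i ↔ _
      split_ifs <;> grind
    exact (congrArg Set.ncard hset).trans (by split_ifs <;> simp)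
  refine ⟨1, fun n hn ↦ ?_⟩
  simpa [accComplexity, hcomplexity] using Real.one_le_rpow (by exact_mod_cast hn) hα

lemma succ_le_polyDimStar {L : Set (List A)} {α : ℝ} (hα : 0 ≤ α) {m : ℕ}
    (h : ∀ S : Set (List A), PolyBound (accComplexity S) α → ¬ L ⊆ powL S m) :
    (m + 1 : ℕ) ≤ polyDimStar α L := by
  refine le_sInf ?_
  rintro _ ⟨k, rfl, -, S, hS, hL⟩
  by_contra! hlt
  have hkm : k ≤ m := Nat.lt_succ_iff.1 (Nat.cast_lt.1 hlt)
  let T : Language A := S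
  have hT : PolyBound (accComplexity (T + 1)) α :=
    (hS.add (polyBound_accComplexity_one hα)).mono (accComplexity_add_le T 1)
  have hpow : T ^ k ≤ (T + 1) ^ m :=
    calc T ^ k ≤ (T + 1) ^ k := pow_le_pow_left' le_self_add k
      _ ≤ (T + 1) ^ m := pow_le_pow_right' le_add_self hkm
  exact h _ hT ((hL.trans (powL_eq_pow T k).le).trans (hpow.trans (powL_eq_pow _ m).ge))

end Dimension

section Splitting

lemma exists_forall_of_wellFounded {α β : Type*} [Inhabited β] {r : α → α → Prop}
    (hr : WellFounded r) {P : α → (α → β) → β → Prop}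
    (hlocal : ∀ a f g b, (∀ x, r x a → f x = g x) → P a f b → P a g b)
    (hstep : ∀ a f, ∃ b, P a f b) : ∃ f : α → β, ∀ a, P a f (f a) := by
  classical
  choose pick hpick using hstep
  let restrict (a : α) (f : ∀ x, r x a → β) (x : α) : β := if h : r x a then f x h else default
  let f : α → β := hr.fix fun a f ↦ pick a (restrict a f)
  refine ⟨f, fun a ↦ hlocal a (restrict a fun x _ ↦ f x) f (f a) (fun x hx ↦ dif_pos hx) ?_⟩
  rw [show f a = pick a (restrict a fun x _ ↦ f x) from hr.fix_eq _ a]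
  exact hpick a _

lemma exists_card_fiber_add_card_fiber_le {ι : Type*} {P : Finset ι} {n C : ℕ}
    (hP : P.card ≤ C * (n + 1)) (f g : ι → ℕ) :
    ∃ i ≤ n, (P.filter (f · = i)).card + (P.filter (g · = n - i)).card ≤ 2 * C := by
  have hfiber (h : ι → ℕ) : ∑ i ∈ Finset.range (n + 1), (P.filter (h · = i)).card ≤ P.card := by
    rw [Finset.sum_card_fiberwise_eq_card_filter]
    exact Finset.card_filter_le _ _
  have hg := Finset.sum_range_reflect (fun i ↦ (P.filter (g · = i)).card) (n + 1)
  have hsum : ∑ i ∈ Finset.range (n + 1),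
      ((P.filter (f · = i)).card + (P.filter (g · = n - i)).card) ≤
      ∑ _i ∈ Finset.range (n + 1), 2 * C := by
    rw [Finset.sum_add_distrib]
    simp only [Nat.add_sub_cancel] at hg
    simp only [hg, Finset.sum_const, Finset.card_range, smul_eq_mul]
    linarith [hfiber f, hfiber g]
  obtain ⟨i, hi, hle⟩ := Finset.exists_le_of_sum_le (by simp) hsum
  exact ⟨i, Finset.mem_range_succ_iff.1 hi, hle⟩

lemma encard_fiber_le {ι κ : Type*} [LinearOrder ι] {f : ι → κ} {D : ℕ}
    (hf : ∀ w, {v | v < w ∧ f v = f w}.encard ≤ D) (i : κ) : {v | f v = i}.encard ≤ D + 1 := by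
  by_contra! hlt
  obtain ⟨t, ht, htcard⟩ := Set.exists_subset_encard_eq (Order.add_one_le_of_lt hlt)
  have htfin : t.Finite := Set.finite_of_encard_eq_coe (k := D + 1 + 1) (by simpa using htcard)
  obtain ⟨w, hw, hmax⟩ := t.exists_max_image id htfin
    (Set.nonempty_of_encard_ne_zero (by simp [htcard]))
  have hpred : t \ {w} ⊆ {v | v < w ∧ f v = f w} := fun v hv ↦
    ⟨lt_of_le_of_ne (hmax v hv.1) hv.2, (ht hv.1).trans (ht hw).symm⟩
  have hle : t.encard ≤ D + 1 := by
    rw [← Set.encard_sdiff_singleton_add_one hw]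
    gcongr
    exact (Set.encard_le_encard hpred).trans (hf w)
  rw [htcard] at hle
  exact absurd hle (by exact_mod_cast Nat.not_succ_le_self (D + 1))

lemma exists_balanced_cut {ι : Type*} [LinearOrder ι] [WellFoundedLT ι] {ℓ : ι → ℕ} {C : ℕ}
    (hC : ∀ w, (Set.Iio w).encard ≤ (C * (ℓ w + 1) : ℕ)) :
    ∃ c : ι → ℕ, (∀ v, c v ≤ ℓ v) ∧ (∀ i, {v | c v = i}.encard ≤ (2 * C : ℕ) + 1) ∧
      ∀ i, {v | ℓ v - c v = i}.encard ≤ (2 * C : ℕ) + 1 := by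
  classical
  let P (w : ι) (c : ι → ℕ) (i : ℕ) : Prop :=
    i ≤ ℓ w ∧ {v | v < w ∧ c v = i}.encard ≤ (2 * C : ℕ) ∧
      {v | v < w ∧ ℓ v - c v = ℓ w - i}.encard ≤ (2 * C : ℕ)
  have hlocal (w : ι) (c d : ι → ℕ) (i : ℕ) (hcd : ∀ v < w, c v = d v) : P w c i → P w d i := by
    have hset (p : ℕ → ι → Prop) : {v | v < w ∧ p (c v) v} = {v | v < w ∧ p (d v) v} :=
      Set.ext fun v ↦ and_congr_right fun hv ↦ by rw [hcd v hv]
    simp only [P]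
    rw [hset fun a _ ↦ a = i, hset fun a v ↦ ℓ v - a = ℓ w - i]
    exact id
  have hstep (w : ι) (c : ι → ℕ) : ∃ i, P w c i := by
    have hfin : (Set.Iio w).Finite := Set.finite_of_encard_le_coe (hC w)
    have hcard : hfin.toFinset.card ≤ C * (ℓ w + 1) := by
      exact_mod_cast hfin.encard_eq_coe_toFinset_card ▸ hC w
    obtain ⟨i, hi, hle⟩ := exists_card_fiber_add_card_fiber_le hcard c fun v ↦ ℓ v - c v
    have hset (p : ι → Prop) [DecidablePred p] :
        {v | v < w ∧ p v}.encard = (hfin.toFinset.filter p).card := by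
      rw [← Set.encard_coe_eq_coe_finsetCard]
      simp [Set.ofPred_and]
    refine ⟨i, hi, ?_, ?_⟩ <;> rw [hset] <;> norm_cast <;> omega
  obtain ⟨c, hc⟩ := exists_forall_of_wellFounded wellFounded_lt hlocal hstep
  exact ⟨c, fun v ↦ (hc v).1, encard_fiber_le fun w ↦ (hc w).2.1,
    encard_fiber_le (f := fun v ↦ ℓ v - c v) fun w ↦ (hc w).2.2⟩

lemma complexity_range_le {ι : Type*} {f : ι → List A} {D n : ℕ}
    (hf : {v | (f v).length = n}.encard ≤ D) : complexity (Set.range f) n ≤ D := by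
  have himage : {w ∈ Set.range f | w.length = n} = f '' {v | (f v).length = n} := by
    ext w
    simp only [Set.mem_ofPred_eq, Set.mem_image, Set.mem_range]
    grind
  rw [complexity, himage]
  exact ENat.toNat_le_of_le_natCast ((Set.encard_image_le f _).trans hf)

lemma exists_subset_mul_of_polyBound_accComplexity [Finite A] {S : Set (List A)}
    (hS : PolyBound (accComplexity S) 1) :
    ∃ T₁ T₂ : Language A, PolyBound (complexity T₁) 0 ∧ PolyBound (complexity T₂) 0 ∧
      S ⊆ T₁ * T₂ := by
  obtain ⟨C, hC⟩ := polyBound_one_iff.1 hS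
  have := Encodable.ofCountable A
  let key (w : S) : ℕ ×ₗ ℕ := toLex (w.1.length, Encodable.encode w.1)
  have hkey : key.Injective := fun v w h ↦
    Subtype.ext (Encodable.encode_injective (congrArg (fun p ↦ (ofLex p).2) h))
  let _ : LinearOrder S := LinearOrder.lift' key hkey
  have : WellFoundedLT S := ⟨InvImage.wf key wellFounded_lt⟩
  have hIio (w : S) : (Set.Iio w).encard ≤ (C * (w.1.length + 1) : ℕ) := by
    have hsub : Subtype.val '' Set.Iio w ⊆ {v ∈ S | v.length ≤ w.1.length} := by
      rintro _ ⟨v, hv, rfl⟩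
      exact ⟨v.2, Prod.Lex.monotone_fst (key v) (key w) (le_of_lt hv)⟩
    rw [← Subtype.val_injective.encard_image]
    refine (Set.encard_le_encard hsub).trans ?_
    rw [← (finite_setOf_mem_length_le S _).cast_ncard_eq, ← accComplexity_eq_ncard]
    exact_mod_cast hC _
  obtain ⟨c, hc, hleft, hright⟩ := exists_balanced_cut hIio
  refine ⟨Set.range fun w : S ↦ w.1.take (c w), Set.range fun w : S ↦ w.1.drop (c w),
    polyBound_zero_iff.2 ⟨2 * C + 1, fun n ↦ complexity_range_le ?_⟩,
    polyBound_zero_iff.2 ⟨2 * C + 1, fun n ↦ complexity_range_le ?_⟩, fun w hw ↦ ?_⟩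
  · simpa [hc] using hleft n
  · simpa using hright n
  · exact Language.mem_mul.2 ⟨_, ⟨⟨w, hw⟩, rfl⟩, _, ⟨⟨w, hw⟩, rfl⟩, List.take_append_drop _ _⟩

end Splitting

section SparseFamilies

lemma sum_range_div_succ_sq_le (X N : ℕ) :
    ∑ t ∈ Finset.range N, X / (t + 1) ^ 2 ≤ 2 * X := by
  have hinv : ∑ t ∈ Finset.range N, (((t + 1 : ℕ) : ℝ) ^ 2)⁻¹ ≤ 2 := by
    have := sum_Ioo_inv_sq_le (α := ℝ) 0 (N + 1)
    rw [Finset.range_eq_Ico, Finset.sum_Ico_add' (fun i : ℕ ↦ ((i : ℝ) ^ 2)⁻¹) 0 N 1, zero_add]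
    have hIoo : Finset.Ioo 0 (N + 1) = Finset.Ico 1 (N + 1) := rfl
    simpa [hIoo] using this
  have hdiv : ∑ t ∈ Finset.range N, ((X / (t + 1) ^ 2 : ℕ) : ℝ) ≤
      X * ∑ t ∈ Finset.range N, (((t + 1 : ℕ) : ℝ) ^ 2)⁻¹ := by
    rw [Finset.mul_sum]
    refine Finset.sum_le_sum fun t _ ↦ Nat.cast_div_le.trans_eq ?_
    push_cast
    rw [div_eq_mul_inv]
  have hcast : ((∑ t ∈ Finset.range N, X / (t + 1) ^ 2 : ℕ) : ℝ) ≤ (2 * X : ℕ) := by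
    push_cast at hdiv ⊢
    push_cast at hinv
    nlinarith [mul_le_mul_of_nonneg_left hinv (Nat.cast_nonneg (α := ℝ) X)]
  exact_mod_cast hcast

lemma polyBound_accComplexity_of_sparse [Finite A] {S : Set (List A)} {K : ℕ}
    {f : ℕ → ℕ → List A}
    (hS : ∀ w ∈ S, ∃ t c, w = f t c ∧ (c + 1) * (t + 1) ^ 2 ≤ K * (w.length + 1)) :
    PolyBound (accComplexity S) 1 := by
  classical
  refine polyBound_one_iff.2 ⟨2 * K, fun n ↦ ?_⟩
  let X := K * (n + 1)
  let P := (Finset.range X).sigma fun t ↦ Finset.range (X / (t + 1) ^ 2)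
  have hsub : {w ∈ S | w.length ≤ n} ⊆ (P.image fun p ↦ f p.1 p.2 : Finset (List A)) := by
    rintro w ⟨hw, hn⟩
    obtain ⟨t, c, rfl, hle⟩ := hS w hw
    have hX : (c + 1) * (t + 1) ^ 2 ≤ X := hle.trans (Nat.mul_le_mul_left K (Nat.succ_le_succ hn))
    have ht : t < X := by nlinarith
    have hc : c < X / (t + 1) ^ 2 := (Nat.le_div_iff_mul_le (by positivity)).2 hX
    exact Finset.mem_coe.2 (Finset.mem_image.2 ⟨⟨t, c⟩, by simp [P, ht, hc], rfl⟩)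
  calc accComplexity S n = {w ∈ S | w.length ≤ n}.ncard := accComplexity_eq_ncard S n
    _ ≤ (P.image fun p ↦ f p.1 p.2).card :=
      (Set.ncard_le_ncard hsub (Finset.finite_toSet _)).trans_eq (Set.ncard_coe_finset _)
    _ ≤ P.card := Finset.card_image_le
    _ = ∑ t ∈ Finset.range X, X / (t + 1) ^ 2 := by simp [P, Finset.card_sigma]
    _ ≤ 2 * X := sum_range_div_succ_sq_le X X
    _ = 2 * K * (n + 1) := (mul_assoc _ _ _).symm

end SparseFamilies

section BlockWords

/-- The word `a b^k a b^(k+1) ⋯ a b^(k+r-1)`, i.e. `r` consecutive blocks of the infinite product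
defining `u`. -/
def blockWord (k r : ℕ) : List Bool :=
  (List.range' k r).flatMap fun i ↦ false :: List.replicate i true

lemma blockWord_zero (k : ℕ) : blockWord k 0 = [] := rfl

lemma blockWord_add (k r s : ℕ) : blockWord k (r + s) = blockWord k r ++ blockWord (k + r) s := by
  rw [blockWord, ← List.range'_append_1, List.flatMap_append]
  rfl

lemma blockWord_one (k : ℕ) : blockWord k 1 = false :: List.replicate k true := by
  simp [blockWord]

lemma blockWord_succ_left (k r : ℕ) :
    blockWord k (r + 1) = false :: (List.replicate k true ++ blockWord (k + 1) r) := by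
  rw [add_comm, blockWord_add, blockWord_one, List.cons_append]

lemma blockWord_succ_right (k r : ℕ) :
    blockWord k (r + 1) = blockWord k r ++ false :: List.replicate (k + r) true := by
  rw [blockWord_add, blockWord_one]

lemma two_mul_length_blockWord (k r : ℕ) : 2 * (blockWord k r).length = r * (2 * k + r + 1) := by
  induction r with
  | zero => simp [blockWord_zero]
  | succ r ih =>
    rw [blockWord_succ_right, List.length_append, List.length_cons, List.length_replicate, mul_add,
      ih]
    ring

lemma count_false_blockWord (k r : ℕ) : (blockWord k r).count false = r := by
  induction r with
  | zero => simp [blockWord_zero]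
  | succ r ih => simp [blockWord_succ_right, ih, List.count_replicate]

/-- The word `b^i a b^k a b^(k+1) ⋯ a b^(k+r-1) a b^j`: the general form of a factor of `u`
containing the letter `a`, and of many of its prefixes and suffixes. -/
def framedWord (i k r j : ℕ) : List Bool :=
  List.replicate i true ++ (blockWord k r ++ false :: List.replicate j true)

lemma isPrefix_append_iff {w s t : List A} :
    w <+: s ++ t ↔ w <+: s ∨ ∃ v, w = s ++ v ∧ v <+: t := by
  constructor
  · rintro ⟨z, hz⟩
    rcases List.append_eq_append_iff.1 hz with ⟨v, rfl, -⟩ | ⟨v, rfl, rfl⟩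
    · exact .inl (List.prefix_append w v)
    · exact .inr ⟨v, rfl, List.prefix_append v z⟩
  · rintro (h | ⟨v, rfl, hv⟩)
    · exact List.prefix_append_of_prefix h
    · exact (List.prefix_append_right_inj s).2 hv

lemma isSuffix_append_iff {w s t : List A} :
    w <:+ s ++ t ↔ w <:+ t ∨ ∃ v, w = v ++ t ∧ v <:+ s := by
  rw [← List.reverse_prefix, List.reverse_append, isPrefix_append_iff, List.reverse_prefix]
  refine or_congr_right ⟨?_, ?_⟩
  · rintro ⟨v, hw, hv⟩
    exact ⟨v.reverse, by simpa using congrArg List.reverse hw,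
      by rwa [← List.reverse_prefix, List.reverse_reverse]⟩
  · rintro ⟨v, rfl, hv⟩
    exact ⟨v.reverse, List.reverse_append, List.reverse_prefix.2 hv⟩

lemma exists_eq_of_isSuffix_blockWord {w : List Bool} {k r : ℕ} (hw : w <:+ blockWord k r) :
    ∃ i k' r', k ≤ k' ∧ w = List.replicate i true ++ blockWord k' r' := by
  induction r generalizing k with
  | zero => exact ⟨0, k, 0, le_rfl, List.suffix_nil.1 hw⟩
  | succ r ih =>
    rw [blockWord_succ_left, List.suffix_cons_iff, isSuffix_append_iff] at hw
    rcases hw with rfl | hw | ⟨v, rfl, hv⟩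
    · exact ⟨0, k, r + 1, le_rfl, by rw [blockWord_succ_left]; rfl⟩
    · obtain ⟨i, k', r', hk, rfl⟩ := ih hw
      exact ⟨i, k', r', by omega, rfl⟩
    · exact ⟨v.length, k + 1, r, k.le_succ, by rw [← (List.suffix_replicate_iff.1 hv).2]⟩

lemma exists_eq_of_isPrefix_blockWord {w : List Bool} {k r : ℕ} (hw : w <+: blockWord k r) :
    w = [] ∨ ∃ r' j, w = framedWord 0 k r' j := by
  induction r generalizing w with
  | zero => exact .inl (List.prefix_nil.1 hw)
  | succ r ih =>
    rw [blockWord_succ_right, isPrefix_append_iff] at hw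
    rcases hw with hw | ⟨v, rfl, hv⟩
    · exact ih hw
    rcases List.prefix_cons_iff.1 hv with rfl | ⟨t, rfl, ht⟩
    · rw [List.append_nil]
      exact ih List.prefix_rfl
    · exact .inr ⟨r, t.length, by rw [(List.prefix_replicate_iff.1 ht).2]; simp [framedWord]⟩

lemma exists_eq_of_isInfix_blockWord {w : List Bool} {k r : ℕ} (hw : w <:+: blockWord k r) :
    (∃ i, w = List.replicate i true) ∨ ∃ i k' r' j, k ≤ k' ∧ w = framedWord i k' r' j := by
  obtain ⟨t, hwt, ht⟩ := List.infix_iff_prefix_suffix.1 hw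
  obtain ⟨i, k', r', hk, rfl⟩ := exists_eq_of_isSuffix_blockWord ht
  rcases isPrefix_append_iff.1 hwt with hw | ⟨v, rfl, hv⟩
  · exact .inl ⟨w.length, (List.prefix_replicate_iff.1 hw).2⟩
  rcases exists_eq_of_isPrefix_blockWord hv with rfl | ⟨r'', j, rfl⟩
  · exact .inl ⟨i, List.append_nil _⟩
  · exact .inr ⟨i, k', r'', j, hk, rfl⟩

lemma framedWord_isInfix_blockWord {i k r j : ℕ} (hi : i < k) (hj : j ≤ k + r) :
    framedWord i k r j <:+: blockWord 1 (k + r) := by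
  obtain ⟨l, rfl⟩ := Nat.exists_eq_add_one.2 (Nat.zero_lt_of_lt hi)
  have hsuf : List.replicate i true <:+ blockWord 1 l := by
    rcases l with _ | l
    · obtain rfl : i = 0 := by omega
      exact List.nil_suffix
    · rw [blockWord_succ_right]
      have hrun : List.replicate i true <:+ List.replicate (1 + l) true :=
        List.suffix_replicate_iff.2 ⟨by rw [List.length_replicate]; omega, by simp⟩
      exact hrun.trans (List.suffix_append_of_suffix (List.suffix_cons _ _))
  have hpre : blockWord (l + 1) r ++ false :: List.replicate j true <+:
      blockWord (l + 1) (r + 1) := by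
    rw [blockWord_succ_right, List.prefix_append_right_inj, List.cons_prefix_cons]
    exact ⟨rfl, List.prefix_replicate_iff.2 ⟨by simpa using hj, by simp⟩⟩
  obtain ⟨s, hs⟩ := hsuf
  obtain ⟨t, ht⟩ := hpre
  refine ⟨s, t, ?_⟩
  rw [add_assoc l, add_comm 1 r, blockWord_add, add_comm 1 l, ← hs, ← ht]
  simp only [framedWord, List.append_assoc]

end BlockWords

section Factors

lemma length_wordSeg (x : ℕ → A) (i n : ℕ) : (wordSeg x i n).length = n := by
  simp [wordSeg]

lemma wordSeg_add (x : ℕ → A) (i m n : ℕ) :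
    wordSeg x i (m + n) = wordSeg x i m ++ wordSeg x (i + m) n := by
  simp [wordSeg, List.range_add, Function.comp_def, add_assoc]

lemma isFactorial_Fac (x : ℕ → A) : IsFactorial (Fac x) := by
  rintro _ ⟨i, n, rfl⟩ v ⟨s, t, h⟩
  have hn : n = s.length + v.length + t.length := by
    rw [← length_wordSeg x i n, ← h, List.length_append, List.length_append]
  rw [hn, wordSeg_add, wordSeg_add] at h
  have hsv := (List.append_inj h (by simp [length_wordSeg])).1
  exact ⟨i + s.length, v.length, (List.append_inj hsv (by simp [length_wordSeg])).2⟩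

lemma uWord_eq_false_iff {n : ℕ} : uWord n = false ↔ ∃ m, 2 * n = m * (m + 3) := by
  simp [uWord]

lemma wordSeg_uWord_block {p n : ℕ} (hp : 2 * p = n * (n + 3)) :
    wordSeg uWord p (n + 2) = blockWord (n + 1) 1 := by
  have hfalse : uWord p = false := uWord_eq_false_iff.2 ⟨n, hp⟩
  have htrue (j : ℕ) (hj : j < n + 1) : uWord (p + 1 + j) = true := by
    rw [← Bool.not_eq_false, uWord_eq_false_iff]
    rintro ⟨m, hm⟩
    have hlower : n < m := by nlinarith
    have hupper : m < n + 1 := by nlinarith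
    omega
  rw [blockWord_one, add_comm n 2, show 2 + n = 1 + (n + 1) by omega, wordSeg_add]
  refine congrArg₂ _ (by simpa [wordSeg] using hfalse) (List.eq_replicate_iff.2 ⟨?_, ?_⟩)
  · exact length_wordSeg _ _ _
  · simpa [wordSeg] using htrue

lemma wordSeg_uWord_blockWord (n : ℕ) :
    wordSeg uWord 0 (blockWord 1 n).length = blockWord 1 n := by
  induction n with
  | zero => rfl
  | succ n ih =>
    have hlength := two_mul_length_blockWord 1 n
    have hblock := wordSeg_uWord_block (p := (blockWord 1 n).length) (n := n) (by grind)
    rw [blockWord_add, List.length_append, wordSeg_add, ih, zero_add, add_comm 1 n, ← hblock,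
      length_wordSeg]

lemma mem_Fac_uWord_iff {w : List Bool} : w ∈ Fac uWord ↔ ∃ n, w <:+: blockWord 1 n := by
  constructor
  · rintro ⟨i, n, rfl⟩
    refine ⟨i + n, ?_⟩
    have hlength : i + n ≤ (blockWord 1 (i + n)).length := by
      nlinarith [two_mul_length_blockWord 1 (i + n)]
    obtain ⟨l, hl⟩ := Nat.exists_eq_add_of_le hlength
    rw [← wordSeg_uWord_blockWord, hl, wordSeg_add, wordSeg_add, zero_add]
    exact List.infix_append _ _ _
  · rintro ⟨n, hn⟩
    exact isFactorial_Fac _ _ ⟨0, _, (wordSeg_uWord_blockWord n).symm⟩ _ hn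

lemma exists_eq_of_mem_Fac_uWord {w : List Bool} (hw : w ∈ Fac uWord) :
    (∃ i, w = List.replicate i true) ∨ ∃ i k r j, 1 ≤ k ∧ w = framedWord i k r j := by
  obtain ⟨n, hn⟩ := mem_Fac_uWord_iff.1 hw
  exact exists_eq_of_isInfix_blockWord hn

lemma framedWord_mem_Fac_uWord {i k r j : ℕ} (hi : i < k) (hj : j ≤ k + r) :
    framedWord i k r j ∈ Fac uWord :=
  mem_Fac_uWord_iff.2 ⟨k + r, framedWord_isInfix_blockWord hi hj⟩

end Factors

section UpperBound

/-- The language of runs `b^i`. -/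
def runs : Language Bool := {w | ∃ i, w = List.replicate i true}

/-- The block words `a b^k ⋯ a b^(m-1)` with `m = k + t` a multiple of a power of two exceeding `t`
(`Nat.size t` is the least `s` with `t < 2 ^ s`): the parts of factors of `u` to the left of a
dyadic centre `m`. -/
def leftHalves : Language Bool := {w | ∃ k t, 2 ^ t.size ∣ k + t ∧ w = blockWord k t}

/-- The block words `a b^k ⋯ a b^(k+t-1)` with `k ≥ 1` a multiple of a power of two exceeding `t`:
the parts of factors of `u` to the right of a dyadic centre `k`. -/
def rightHalves : Language Bool := {w | ∃ k t, 1 ≤ k ∧ 2 ^ t.size ∣ k ∧ w = blockWord k t}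

/-- The empty word and the incomplete last blocks `a b^j` of factors of `u`. -/
def tails : Language Bool := {w | w = [] ∨ ∃ j, w = false :: List.replicate j true}

lemma polyBound_complexity_of_length_injOn {S : Set (List A)}
    (hS : Set.InjOn List.length S) : PolyBound (complexity S) 0 := by
  refine polyBound_zero_iff.2 ⟨1, fun n ↦ ?_⟩
  have hsub : {w ∈ S | w.length = n}.Subsingleton :=
    fun v hv w hw ↦ hS hv.1 hw.1 (hv.2.trans hw.2.symm)
  have := hsub.finite.to_subtype
  exact Set.ncard_le_one_iff_subsingleton.2 hsub

lemma polyBound_complexity_runs : PolyBound (complexity runs) 0 := by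
  refine polyBound_complexity_of_length_injOn ?_
  rintro _ ⟨i, rfl⟩ _ ⟨j, rfl⟩ h
  simpa using h

lemma polyBound_complexity_tails : PolyBound (complexity tails) 0 := by
  refine polyBound_complexity_of_length_injOn ?_
  rintro _ (rfl | ⟨i, rfl⟩) _ (rfl | ⟨j, rfl⟩) h
  all_goals simp_all

lemma exists_succ_mul_two_pow_size {t m : ℕ} (hm : 0 < m) (h : 2 ^ t.size ∣ m) :
    ∃ c, m = (c + 1) * 2 ^ t.size ∧ (c + 1) * (t + 1) ≤ m := by
  obtain ⟨c, rfl⟩ := exists_eq_mul_left_of_dvd h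
  obtain ⟨c, rfl⟩ := Nat.exists_eq_add_of_lt (Nat.pos_of_mul_pos_right hm)
  exact ⟨c, by rw [zero_add], by
    rw [zero_add]; exact Nat.mul_le_mul_left _ (Nat.lt_size_self t)⟩

lemma polyBound_accComplexity_leftHalves : PolyBound (accComplexity leftHalves) 1 := by
  refine polyBound_accComplexity_of_sparse (K := 2)
    (f := fun t c ↦ blockWord ((c + 1) * 2 ^ t.size - t) t) ?_
  rintro _ ⟨k, t, hdvd, rfl⟩
  rcases Nat.eq_zero_or_pos t with rfl | ht
  · exact ⟨0, 0, rfl, by simp [blockWord_zero]⟩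
  obtain ⟨c, hc, hle⟩ := exists_succ_mul_two_pow_size (by omega) hdvd
  refine ⟨t, c, by simp only [← hc, Nat.add_sub_cancel], ?_⟩
  rw [mul_add, two_mul_length_blockWord]
  nlinarith

lemma polyBound_accComplexity_rightHalves : PolyBound (accComplexity rightHalves) 1 := by
  refine polyBound_accComplexity_of_sparse (K := 2)
    (f := fun t c ↦ blockWord ((c + 1) * 2 ^ t.size) t) ?_
  rintro _ ⟨k, t, hk, hdvd, rfl⟩
  rcases Nat.eq_zero_or_pos t with rfl | ht
  · exact ⟨0, 0, rfl, by simp [blockWord_zero]⟩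
  obtain ⟨c, hc, hle⟩ := exists_succ_mul_two_pow_size hk hdvd
  refine ⟨t, c, by simp only [← hc], ?_⟩
  rw [mul_add, two_mul_length_blockWord]
  nlinarith

lemma exists_dyadic_center {k : ℕ} (hk : 1 ≤ k) (r : ℕ) :
    ∃ s t, s + t = r ∧ 2 ^ s.size ∣ k + s ∧ 2 ^ t.size ∣ k + s := by
  suffices ∃ s t e, s + t = r ∧ s < 2 ^ e ∧ t < 2 ^ e ∧ 2 ^ e ∣ k + s by
    obtain ⟨s, t, e, hr, hs, ht, he⟩ := this
    exact ⟨s, t, hr, (Nat.pow_dvd_pow 2 (Nat.size_le.2 hs)).trans he,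
      (Nat.pow_dvd_pow 2 (Nat.size_le.2 ht)).trans he⟩
  induction r using Nat.strong_induction_on generalizing k with
  | _ r ih =>
    rcases Nat.eq_zero_or_pos r with rfl | hr
    · exact ⟨0, 0, 0, by simp⟩
    -- Twice a centre of the halved interval is a centre of the interval.
    obtain ⟨s, t, e, hst, hs, ht, he⟩ :=
      ih ((k + r) / 2 - (k + 1) / 2) (by omega) (k := (k + 1) / 2) (by omega)
    have hpow : 2 ^ (e + 1) = 2 * 2 ^ e := pow_succ' 2 e
    refine ⟨2 * ((k + 1) / 2 + s) - k, k + r - 2 * ((k + 1) / 2 + s), e + 1, by omega, by omega,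
      by omega, ?_⟩
    rw [hpow, Nat.add_sub_cancel' (by omega)]
    exact Nat.mul_dvd_mul_left 2 he

lemma Fac_uWord_subset : Fac uWord ⊆ (runs * leftHalves * rightHalves * tails : Language Bool) := by
  intro w hw
  obtain ⟨i, v, hv, z, hz, rfl⟩ :
      ∃ i, ∃ v ∈ leftHalves * rightHalves, ∃ z ∈ tails, w = List.replicate i true ++ v ++ z := by
    rcases exists_eq_of_mem_Fac_uWord hw with ⟨i, rfl⟩ | ⟨i, k, r, j, hk, rfl⟩
    · have hnil : [] ∈ leftHalves * rightHalves :=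
        ⟨[], ⟨0, 0, by simp, rfl⟩, [], ⟨1, 0, by simp, by simp, rfl⟩, rfl⟩
      exact ⟨i, [], hnil, [], .inl rfl, by simp⟩
    · obtain ⟨s, t, rfl, hs, ht⟩ := exists_dyadic_center hk r
      refine ⟨i, blockWord k (s + t), ?_, _, .inr ⟨j, rfl⟩, by simp [framedWord]⟩
      exact ⟨_, ⟨k, s, hs, rfl⟩, _, ⟨k + s, t, by omega, ht, rfl⟩, (blockWord_add k s t).symm⟩
  rw [mul_assoc runs]
  exact Language.append_mem_mul (Language.append_mem_mul ⟨i, rfl⟩ hv) hz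

lemma polyDimStar_Fac_uWord_le : polyDimStar 1 (Fac uWord) ≤ 4 := by
  refine polyDimStar_le_length (Ls := [runs, leftHalves, rightHalves, tails]) (by simp) ?_ ?_
  · simp only [List.forall_mem_cons]
    exact ⟨polyBound_accComplexity_of_polyBound_complexity polyBound_complexity_runs,
      polyBound_accComplexity_leftHalves, polyBound_accComplexity_rightHalves,
      polyBound_accComplexity_of_polyBound_complexity polyBound_complexity_tails, by simp⟩
  · simpa [mul_assoc] using Fac_uWord_subset

lemma polyDim_Fac_uWord_le : polyDim 0 (Fac uWord) ≤ 6 := by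
  obtain ⟨L₁, L₂, hL₁, hL₂, hL⟩ :=
    exists_subset_mul_of_polyBound_accComplexity polyBound_accComplexity_leftHalves
  obtain ⟨R₁, R₂, hR₁, hR₂, hR⟩ :=
    exists_subset_mul_of_polyBound_accComplexity polyBound_accComplexity_rightHalves
  refine polyDim_le_length (Ls := [runs, L₁, L₂, R₁, R₂, tails]) (by simp) ?_ ?_
  · simp only [List.forall_mem_cons]
    exact ⟨polyBound_complexity_runs, hL₁, hL₂, hR₁, hR₂, polyBound_complexity_tails, by simp⟩
  · have hmul : runs * leftHalves * rightHalves * tails ≤ runs * (L₁ * L₂) * (R₁ * R₂) * tails :=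
      mul_le_mul' (mul_le_mul' (mul_le_mul' le_rfl hL) hR) le_rfl
    simpa [mul_assoc] using Fac_uWord_subset.trans hmul

end UpperBound

section Cuts

/-- The number of letters `b` at the beginning of a word. -/
def initialRun (s : List Bool) : ℕ := (s.takeWhile id).length

/-- The number of letters `b` directly after the first letter `a` of a word. -/
def firstGap (s : List Bool) : ℕ := initialRun (s.dropWhile id).tail

/-- The pair of numbers which recovers `(q, κ)` from any piece of a word `b^i a b^(2κ) a ⋯` with
`3q + 1` letters `a` that misses at most one of them at either end. -/
def gapStatistic (s : List Bool) : ℕ × ℕ := ((s.count false + 1) / 3, firstGap s / 2)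

lemma initialRun_replicate_append (i : ℕ) (s : List Bool) :
    initialRun (List.replicate i true ++ false :: s) = i := by
  rw [initialRun, List.takeWhile_append_of_pos (by simp)]
  simp

lemma firstGap_replicate_append (i : ℕ) (s : List Bool) :
    firstGap (List.replicate i true ++ false :: s) = initialRun s := by
  rw [firstGap, List.dropWhile_append_of_pos (by simp)]
  simp

lemma append_eq_replicate_append_cons {a b : A} {i : ℕ} {s t w : List A}
    (h : s ++ t = List.replicate i b ++ a :: w) :
    (∃ x y, s = List.replicate x b ∧ t = List.replicate y b ++ a :: w) ∨
      ∃ s', s = List.replicate i b ++ a :: s' ∧ s' ++ t = w := by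
  rcases List.append_eq_append_iff.1 h with ⟨t', hi, rfl⟩ | ⟨s', rfl, hs'⟩
  · obtain ⟨-, hs, ht⟩ := List.append_eq_replicate_iff.1 hi.symm
    exact .inl ⟨s.length, t'.length, hs, by rw [← ht]⟩
  · rcases List.cons_eq_append_iff.1 hs' with ⟨rfl, rfl⟩ | ⟨s'', rfl, rfl⟩
    · exact .inl ⟨i, 0, by simp, rfl⟩
    · exact .inr ⟨s'', rfl, rfl⟩

lemma initialRun_eq_and_firstGap_eq {s t w : List Bool} {i k : ℕ} (hs : 2 ≤ s.count false)
    (h : s ++ t = List.replicate i true ++ false :: (List.replicate k true ++ false :: w)) :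
    initialRun s = i ∧ firstGap s = k := by
  rcases append_eq_replicate_append_cons h with ⟨x, -, rfl, -⟩ | ⟨s', rfl, h'⟩
  · simp [List.count_replicate] at hs
  rcases append_eq_replicate_append_cons h' with ⟨x, -, rfl, -⟩ | ⟨s'', rfl, -⟩
  · simp [List.count_replicate] at hs
  · rw [firstGap_replicate_append]
    exact ⟨initialRun_replicate_append _ _, initialRun_replicate_append _ _⟩

lemma framedWord_succ (i k r j : ℕ) :
    framedWord i k (r + 1) j = List.replicate i true ++ false :: framedWord k (k + 1) r j := by
  simp [framedWord, blockWord_succ_left]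

lemma reverse_framedWord_succ (i k r j : ℕ) :
    (framedWord i k (r + 1) j).reverse = List.replicate j true ++ false ::
      (List.replicate (k + r) true ++ false ::
        ((blockWord k r).reverse ++ List.replicate i true)) := by
  simp [framedWord, blockWord_succ_right]

lemma count_false_framedWord (i k r j : ℕ) : (framedWord i k r j).count false = r + 1 := by
  simp [framedWord, count_false_blockWord, List.count_replicate]

lemma initialRun_firstGap_of_append_eq_framedWord {s₁ s₂ s₃ : List Bool} {i k r j : ℕ}
    (hr : 3 ≤ r) (h : s₁ ++ s₂ ++ s₃ = framedWord i k r j) :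
    (initialRun s₁ = i ∧ firstGap s₁ = k) ∨
      (initialRun s₃.reverse = j ∧ firstGap s₃.reverse = k + r - 1) ∨
      r - 1 ≤ s₂.count false ∧ s₂.count false ≤ r + 1 ∧
        (firstGap s₂ = k ∨ firstGap s₂ = k + 1) := by
  obtain ⟨r, rfl⟩ := Nat.exists_eq_add_of_le' hr
  have hcount := congrArg (List.count false) h
  rw [List.count_append, List.count_append, count_false_framedWord] at hcount
  have hleft := h
  rw [List.append_assoc, framedWord_succ, framedWord_succ, framedWord_succ] at hleft
  by_cases h₁ : 2 ≤ s₁.count false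
  · exact .inl (initialRun_eq_and_firstGap_eq h₁ hleft)
  by_cases h₃ : 2 ≤ s₃.count false
  · have hright := congrArg List.reverse h
    rw [List.reverse_append, reverse_framedWord_succ] at hright
    exact .inr (.inl (initialRun_eq_and_firstGap_eq (by rwa [List.count_reverse]) hright))
  refine .inr (.inr ⟨by omega, by omega, ?_⟩)
  have h₂ : 2 ≤ s₂.count false := by omega
  rcases append_eq_replicate_append_cons hleft with ⟨-, x, -, h'⟩ | ⟨s', rfl, h'⟩
  · exact .inl (initialRun_eq_and_firstGap_eq h₂ h').2
  rcases append_eq_replicate_append_cons h' with ⟨-, x, -, h''⟩ | ⟨s'', rfl, -⟩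
  · exact .inr (initialRun_eq_and_firstGap_eq h₂ h'').2
  · simp [List.count_replicate] at h₁

end Cuts

section Counting

variable {F : Finset (List Bool)}

lemma mul_card_le_of_forall_exists {α β : Type*} {s : Finset α} {t : Finset β} {n : ℕ}
    {f : α → ℕ} {g : α → β} (h : ∀ b ∈ t, ∀ i < n, ∃ a ∈ s, f a = i ∧ g a = b) :
    n * t.card ≤ s.card := by
  classical
  have hsub : Finset.range n ×ˢ t ⊆ s.image fun a ↦ (f a, g a) := by
    rintro ⟨i, b⟩ hib
    rw [Finset.mem_product, Finset.mem_range] at hib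
    obtain ⟨a, ha, hfa, hga⟩ := h b hib.2 i hib.1
    exact Finset.mem_image.2 ⟨a, ha, Prod.ext hfa hga⟩
  simpa using (Finset.card_le_card hsub).trans Finset.card_image_le

lemma forall_exists_or_mem_image_gapStatistic {q κ : ℕ} (hq : 1 ≤ q)
    (h : ∀ i < κ, ∀ j < κ, framedWord i (2 * κ) (3 * q) j ∈ powL (F : Set (List Bool)) 3) :
    (∀ i < κ, ∃ s ∈ F, initialRun s = i ∧ firstGap s = 2 * κ) ∨
      (∀ j < κ, ∃ s ∈ F, initialRun s.reverse = j ∧ firstGap s.reverse = 2 * κ + 3 * q - 1) ∨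
      (q, κ) ∈ F.image gapStatistic := by
  by_contra! hnot
  obtain ⟨⟨i, hi, hleft⟩, ⟨j, hj, hright⟩, hmiddle⟩ := hnot
  obtain ⟨_, ⟨_, ⟨e, he, s₁, hs₁, rfl⟩, s₂, hs₂, rfl⟩, s₃, hs₃, hw⟩ := h i hi j hj
  obtain rfl : e = [] := he
  rcases initialRun_firstGap_of_append_eq_framedWord (by omega) hw.symm with
    ⟨hrun, hgap⟩ | ⟨hrun, hgap⟩ | ⟨hlower, hupper, hgap⟩
  · exact hleft s₁ hs₁ hrun hgap
  · exact hright s₃ hs₃ hrun hgap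
  · exact hmiddle (Finset.mem_image.2 ⟨s₂, hs₂, Prod.ext (by dsimp [gapStatistic]; omega)
      (by dsimp [gapStatistic]; omega)⟩)

lemma mul_card_le_of_framedWord_mem {q T : ℕ} {K : Finset ℕ} (hq : 1 ≤ q) (hT : ∀ κ ∈ K, T ≤ κ)
    (h : ∀ κ ∈ K, ∀ i < κ, ∀ j < κ,
      framedWord i (2 * κ) (3 * q) j ∈ powL (F : Set (List Bool)) 3) :
    T * K.card ≤ 2 * F.card + T * {κ ∈ K | (q, κ) ∈ F.image gapStatistic}.card := by
  classical
  let left : Finset ℕ := {κ ∈ K | ∀ i < κ, ∃ s ∈ F, initialRun s = i ∧ firstGap s = 2 * κ}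
  let right : Finset ℕ := {κ ∈ K | ∀ j < κ, ∃ s ∈ F, initialRun s.reverse = j ∧
    firstGap s.reverse = 2 * κ + 3 * q - 1}
  let middle : Finset ℕ := {κ ∈ K | (q, κ) ∈ F.image gapStatistic}
  have hleft : T * left.card ≤ F.card := by
    refine mul_card_le_of_forall_exists (f := initialRun) (g := fun s ↦ firstGap s / 2) ?_
    intro κ hκ i hi
    obtain ⟨hκK, hκ⟩ := Finset.mem_filter.1 hκ
    obtain ⟨s, hs, hrun, hgap⟩ := hκ i (hi.trans_le (hT κ hκK))
    exact ⟨s, hs, hrun, by omega⟩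
  have hright : T * right.card ≤ F.card := by
    refine mul_card_le_of_forall_exists (f := fun s ↦ initialRun s.reverse)
      (g := fun s ↦ (firstGap s.reverse + 1 - 3 * q) / 2) ?_
    intro κ hκ j hj
    obtain ⟨hκK, hκ⟩ := Finset.mem_filter.1 hκ
    obtain ⟨s, hs, hrun, hgap⟩ := hκ j (hj.trans_le (hT κ hκK))
    exact ⟨s, hs, hrun, by omega⟩
  have hcover : K ⊆ left ∪ right ∪ middle := by
    intro κ hκ
    have := forall_exists_or_mem_image_gapStatistic hq (h κ hκ)
    simp only [Finset.mem_union, left, right, middle, Finset.mem_filter]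
    tauto
  have hcard : K.card ≤ left.card + right.card + middle.card :=
    (Finset.card_le_card hcover).trans ((Finset.card_union_le _ _).trans
      (Nat.add_le_add_right (Finset.card_union_le _ _) _))
  calc T * K.card ≤ T * (left.card + right.card + middle.card) := Nat.mul_le_mul_left T hcard
    _ ≤ 2 * F.card + T * middle.card := by rw [mul_add, mul_add]; omega

lemma sum_card_filter_mem_le (M : Finset (ℕ × ℕ)) (Q : Finset ℕ) (K : ℕ → Finset ℕ) :
    ∑ q ∈ Q, {κ ∈ K q | (q, κ) ∈ M}.card ≤ M.card := by
  rw [← Finset.card_sigma]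
  refine Finset.card_le_card_of_injOn (fun p ↦ (p.1, p.2)) (fun p hp ↦ ?_) ?_
  · exact (Finset.mem_filter.1 (Finset.mem_sigma.1 hp).2).2
  · rintro ⟨q, κ⟩ - ⟨q', κ'⟩ - h
    simpa using h

lemma mul_sum_div_succ_le {T Q N : ℕ}
    (h : ∀ q ∈ Finset.Icc 1 Q, ∀ κ ∈ Finset.Icc T (N / q), ∀ i < κ, ∀ j < κ,
      framedWord i (2 * κ) (3 * q) j ∈ powL (F : Set (List Bool)) 3) :
    T * ∑ q ∈ Finset.Icc 1 Q, (N / q + 1) ≤ (2 * Q + T) * F.card + Q * T ^ 2 := by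
  let K (q : ℕ) : Finset ℕ := Finset.Icc T (N / q)
  let middle (q : ℕ) : Finset ℕ := {κ ∈ K q | (q, κ) ∈ F.image gapStatistic}
  have hterm (q : ℕ) (hq : q ∈ Finset.Icc 1 Q) :
      T * (N / q + 1) ≤ 2 * F.card + T ^ 2 + T * (middle q).card := by
    have hKcard : N / q + 1 ≤ (K q).card + T := by simp only [K, Nat.card_Icc]; omega
    have hK : T * (K q).card ≤ 2 * F.card + T * (middle q).card :=
      mul_card_le_of_framedWord_mem (Finset.mem_Icc.1 hq).1
        (fun κ hκ ↦ (Finset.mem_Icc.1 hκ).1) (h q hq)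
    nlinarith
  have hmiddle : ∑ q ∈ Finset.Icc 1 Q, (middle q).card ≤ F.card :=
    (sum_card_filter_mem_le _ _ K).trans Finset.card_image_le
  calc T * ∑ q ∈ Finset.Icc 1 Q, (N / q + 1)
      ≤ ∑ q ∈ Finset.Icc 1 Q, (2 * F.card + T ^ 2 + T * (middle q).card) := by
        rw [Finset.mul_sum]; exact Finset.sum_le_sum hterm
    _ = Q * (2 * F.card + T ^ 2) + T * ∑ q ∈ Finset.Icc 1 Q, (middle q).card := by
        simp [Finset.sum_add_distrib, Finset.mul_sum, mul_add]
    _ ≤ Q * (2 * F.card + T ^ 2) + T * F.card := by gcongr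
    _ = (2 * Q + T) * F.card + Q * T ^ 2 := by ring

end Counting

section LowerBound

lemma exists_lt_harmonic (B : ℝ) : ∃ n, B < harmonic n := by
  refine ⟨⌈Real.exp B⌉₊, ?_⟩
  calc B = Real.log (Real.exp B) := (Real.log_exp B).symm
    _ < Real.log (⌈Real.exp B⌉₊ + 1 : ℕ) := by
      refine Real.log_lt_log (Real.exp_pos B) ?_
      push_cast
      linarith [Nat.le_ceil (Real.exp B)]
    _ ≤ harmonic ⌈Real.exp B⌉₊ := log_add_one_le_harmonic _

lemma mul_harmonic_le_sum_div_succ (N Q : ℕ) :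
    N * harmonic Q ≤ (∑ q ∈ Finset.Icc 1 Q, (N / q + 1) : ℕ) := by
  rw [harmonic_eq_sum_Icc, Finset.mul_sum, Nat.cast_sum]
  refine Finset.sum_le_sum fun q _ ↦ ?_
  rw [← div_eq_mul_inv, ← Nat.floor_div_eq_div (K := ℚ), Nat.cast_succ]
  exact (Nat.lt_floor_add_one _).le

lemma length_framedWord_le {i j q κ N : ℕ} (hi : i < κ) (hj : j < κ) (hq : q ^ 2 ≤ N)
    (hκ : κ * q ≤ N) (hq₁ : 1 ≤ q) : (framedWord i (2 * κ) (3 * q) j).length ≤ 14 * N := by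
  have hlength := two_mul_length_blockWord (2 * κ) (3 * q)
  simp only [framedWord, List.length_append, List.length_cons, List.length_replicate]
  nlinarith

lemma mul_sum_div_succ_le_of_Fac_uWord_subset {S : Set (List Bool)} {C T Q N : ℕ}
    (hS : ∀ n, accComplexity S n ≤ C * (n + 1)) (h : Fac uWord ⊆ powL S 3) (hN : 1 ≤ N)
    (hQN : Q ^ 2 ≤ N) :
    T * ∑ q ∈ Finset.Icc 1 Q, (N / q + 1) ≤ (2 * Q + T) * (15 * C * N) + Q * T ^ 2 := by
  have hfin := finite_setOf_mem_length_le S (14 * N)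
  have hcard : hfin.toFinset.card ≤ 15 * C * N := by
    rw [← Set.ncard_eq_toFinset_card _ hfin, ← accComplexity_eq_ncard]
    calc accComplexity S (14 * N) ≤ C * (14 * N + 1) := hS _
      _ ≤ C * (15 * N) := by gcongr; omega
      _ = 15 * C * N := by ring
  refine (mul_sum_div_succ_le (F := hfin.toFinset) fun q hq κ hκ i hi j hj ↦ ?_).trans (by gcongr)
  rw [Finset.mem_Icc] at hq hκ
  have hmem : framedWord i (2 * κ) (3 * q) j ∈ powL S 3 :=
    h (framedWord_mem_Fac_uWord (by omega) (by omega))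
  have hlength : (framedWord i (2 * κ) (3 * q) j).length ≤ 14 * N :=
    length_framedWord_le hi hj ((Nat.pow_le_pow_left hq.2 2).trans hQN)
      ((Nat.le_div_iff_mul_le hq.1).1 hκ.2) hq.1
  simpa using mem_powL_sep_length_le hmem hlength

lemma harmonic_le_of_Fac_uWord_subset {S : Set (List Bool)} {C Q : ℕ} (hC : 1 ≤ C) (hQ : 1 ≤ Q)
    (hS : ∀ n, accComplexity S n ≤ C * (n + 1)) (h : Fac uWord ⊆ powL S 3) :
    harmonic Q ≤ 15 * C + 2 := by
  -- The choice of `T` and `N` makes both error terms `2 * Q * (15 * C * N)` and `Q * T ^ 2` equal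
  -- to `T * N`.
  obtain ⟨T, hT⟩ : ∃ T, T = 30 * C * Q := ⟨_, rfl⟩
  obtain ⟨N, hN⟩ : ∃ N, N = Q * T := ⟨_, rfl⟩
  have hQT : Q ≤ T := hT ▸ Nat.le_mul_of_pos_left Q (by positivity)
  have hN_pos : 0 < N := hN ▸ Nat.mul_pos hQ (hQ.trans hQT)
  have hQN : Q ^ 2 ≤ N := by rw [sq, hN]; gcongr
  have hsum : T * ∑ q ∈ Finset.Icc 1 Q, (N / q + 1) ≤ T * (N * (15 * C + 2)) :=
    calc T * ∑ q ∈ Finset.Icc 1 Q, (N / q + 1)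
        ≤ (2 * Q + T) * (15 * C * N) + Q * T ^ 2 :=
          mul_sum_div_succ_le_of_Fac_uWord_subset hS h hN_pos hQN
      _ = T * (N * (15 * C + 2)) := by rw [hN, hT]; ring
  have hnat : ∑ q ∈ Finset.Icc 1 Q, (N / q + 1) ≤ N * (15 * C + 2) :=
    Nat.le_of_mul_le_mul_left hsum (hQ.trans hQT)
  have hrat : N * harmonic Q ≤ N * (15 * C + 2) :=
    (mul_harmonic_le_sum_div_succ N Q).trans (by exact_mod_cast hnat)
  exact le_of_mul_le_mul_left hrat (Nat.cast_pos.2 hN_pos)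

lemma not_Fac_uWord_subset_powL_three {S : Set (List Bool)} (hS : PolyBound (accComplexity S) 1) :
    ¬ Fac uWord ⊆ powL S 3 := by
  intro h
  obtain ⟨C, hC⟩ := polyBound_one_iff.1 hS
  have hC' (n : ℕ) : accComplexity S n ≤ (C + 1) * (n + 1) := (hC n).trans (by gcongr; omega)
  obtain ⟨Q, hQ⟩ := exists_lt_harmonic (15 * (C + 1 : ℕ) + 2)
  have hQ' : (15 * (C + 1 : ℕ) + 2 : ℚ) < harmonic Q := by exact_mod_cast hQ
  have hQ₁ : 1 ≤ Q := by
    rw [Nat.one_le_iff_ne_zero]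
    rintro rfl
    rw [harmonic_zero] at hQ'
    exact absurd hQ' (not_lt.2 (by positivity))
  exact hQ'.not_ge (harmonic_le_of_Fac_uWord_subset C.succ_pos hQ₁ hC' h)

end LowerBound

/-- for `u = ∏ a b^i`, there are `S₁, S₂, S₃, S₄` with `S₁, S₄` of
bounded complexity, `S₂, S₃` of linear accumulative complexity and
`Fac(u) ⊆ S₁ S₂ S₃ S₄`; consequently `d*₁(u) = 4` and `d₀(u) ≤ 6`. -/
theorem stmt17 :
    (∃ S₁ S₂ S₃ S₄ : Set (List Bool),
        (∃ C : ℕ, ∀ n : ℕ, complexity S₁ n ≤ C) ∧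
        (∃ C : ℕ, ∀ n : ℕ, complexity S₄ n ≤ C) ∧
        PolyBound (accComplexity S₂) 1 ∧ PolyBound (accComplexity S₃) 1 ∧
        Fac uWord ⊆ prodL (prodL (prodL S₁ S₂) S₃) S₄) ∧
    polyDimStar 1 (Fac uWord) = 4 ∧ polyDim 0 (Fac uWord) ≤ 6 := by
  refine ⟨⟨runs, leftHalves, rightHalves, tails, polyBound_zero_iff.1 polyBound_complexity_runs,
    polyBound_zero_iff.1 polyBound_complexity_tails, polyBound_accComplexity_leftHalves,
    polyBound_accComplexity_rightHalves, ?_⟩, ?_, polyDim_Fac_uWord_le⟩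
  · simpa only [prodL_eq_mul] using Fac_uWord_subset
  · refine le_antisymm polyDimStar_Fac_uWord_le ?_
    exact succ_le_polyDimStar zero_le_one (m := 3) fun S hS ↦ not_Fac_uWord_subset_powL_three hS
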